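/- arXiv:1910.12666 — 3 statements merged into one kernel-verified Lean document; each statement's English description precedes it below -/
import Mathlib

section
/- Let θ ∈ (0, π/2), let |ψ(θ)⟩ = cos θ·|000⟩ + sin θ·|111⟩ be the generalized GHZ state, and let X₀ = σx, X₁ = σy, Y₀ = (σx+σz)/√2, Y₁ = (σy+σz)/√2. Then the unnormalized conditional states on Charlie's qubit satisfy, for all a, b ∈ {0,1}: σ^C_{a,b|X₁,Y₀} = σ^C_{a,b|X₀,Y₁} and σ^C_{a,b|X₁,Y₁} = σ^C_{1−a,b|X₀,Y₀}. -/
open Matrix Complex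
open scoped Matrix Kronecker ComplexOrder

noncomputable section
namespace Paper

/-- Pauli X. -/
def sx : Matrix (Fin 2) (Fin 2) ℂ := !![0, 1; 1, 0]
/-- Pauli Y. -/
def sy : Matrix (Fin 2) (Fin 2) ℂ := !![0, -Complex.I; Complex.I, 0]
/-- Pauli Z. -/
def sz : Matrix (Fin 2) (Fin 2) ℂ := !![1, 0; 0, -1]

/-- Projector onto outcome `a ∈ {0,1}` of a dichotomic observable `O`:
`Π₀ = (I+O)/2`, `Π₁ = (I−O)/2`. -/
def Proj {d : ℕ} (a : Fin 2) (O : Matrix (Fin d) (Fin d) ℂ) : Matrix (Fin d) (Fin d) ℂ :=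
  (2 : ℂ)⁻¹ • (1 + if a = 0 then O else -O)

/-- Outer product `|ψ⟩⟨ψ|`. -/
def outer {n : Type*} (ψ : n → ℂ) : Matrix n n ℂ :=
  Matrix.of fun i j => ψ i * star (ψ j)

/-- `ψ` is a unit vector. -/
def UnitVec {n : Type*} [Fintype n] (ψ : n → ℂ) : Prop := ∑ i, star (ψ i) * ψ i = 1

/-- Hermitian observable with eigenvalues `±1`. -/
def Dichotomic {d : ℕ} (O : Matrix (Fin d) (Fin d) ℂ) : Prop := O.IsHermitian ∧ O * O = 1

/-- Partial trace over the first two tensor factors. -/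
def trAB {dA dB : ℕ} (M : Matrix (Fin dA × Fin dB × Fin 2) (Fin dA × Fin dB × Fin 2) ℂ) :
    Matrix (Fin 2) (Fin 2) ℂ :=
  Matrix.of fun i j => ∑ k : Fin dA, ∑ l : Fin dB, M (k, l, i) (k, l, j)

/-- Unnormalized conditional state on Charlie's qubit:
`σ^C_{a,b|X,Y} = Tr_{AB}[(Π_{a|X} ⊗ Π_{b|Y} ⊗ I₂) ρ]`. -/
def condState {dA dB : ℕ} (ρ : Matrix (Fin dA × Fin dB × Fin 2) (Fin dA × Fin dB × Fin 2) ℂ)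
    (X : Matrix (Fin dA) (Fin dA) ℂ) (Y : Matrix (Fin dB) (Fin dB) ℂ) (a b : Fin 2) :
    Matrix (Fin 2) (Fin 2) ℂ :=
  trAB ((Proj a X ⊗ₖ (Proj b Y ⊗ₖ (1 : Matrix (Fin 2) (Fin 2) ℂ))) * ρ)

/-- Conditional probability `P(c_Z | ·) = Tr[Π_{c|Z} σ] / Tr[σ]`. -/
def condProb (Z σ : Matrix (Fin 2) (Fin 2) ℂ) (c : Fin 2) : ℝ :=
  ((Proj c Z * σ).trace).re / (σ.trace).re

/-- The fine-grained steering expression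
`CP = P(0_{Z₀}|1_{X₀}1_{Y₀}) + P(0_{Z₀}|0_{X₁}1_{Y₁}) + P(0_{Z₁}|0_{X₀}1_{Y₁}) + P(0_{Z₁}|0_{X₁}1_{Y₀})`
with `Z₀ = σx`, `Z₁ = σy`. -/
def CP {dA dB : ℕ} (ρ : Matrix (Fin dA × Fin dB × Fin 2) (Fin dA × Fin dB × Fin 2) ℂ)
    (X0 X1 : Matrix (Fin dA) (Fin dA) ℂ) (Y0 Y1 : Matrix (Fin dB) (Fin dB) ℂ) : ℝ :=
  condProb sx (condState ρ X0 Y0 1 1) 0 + condProb sx (condState ρ X1 Y1 0 1) 0 +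
  condProb sy (condState ρ X0 Y1 0 1) 0 + condProb sy (condState ρ X1 Y0 0 1) 0

/-- The four conditioning events in `CP` have positive probability. -/
def PosEvents {dA dB : ℕ} (ρ : Matrix (Fin dA × Fin dB × Fin 2) (Fin dA × Fin dB × Fin 2) ℂ)
    (X0 X1 : Matrix (Fin dA) (Fin dA) ℂ) (Y0 Y1 : Matrix (Fin dB) (Fin dB) ℂ) : Prop :=
  0 < ((condState ρ X0 Y0 1 1).trace).re ∧ 0 < ((condState ρ X1 Y1 0 1).trace).re ∧
  0 < ((condState ρ X0 Y1 0 1).trace).re ∧ 0 < ((condState ρ X1 Y0 0 1).trace).re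

/-- Product across the bipartition `A|BC`. -/
def BisepA {dA dB : ℕ} (ψ : Fin dA × Fin dB × Fin 2 → ℂ) : Prop :=
  ∃ (u : Fin dA → ℂ) (v : Fin dB × Fin 2 → ℂ), ∀ i j k, ψ (i, j, k) = u i * v (j, k)

/-- Product across the bipartition `B|AC`. -/
def BisepB {dA dB : ℕ} (ψ : Fin dA × Fin dB × Fin 2 → ℂ) : Prop :=
  ∃ (u : Fin dB → ℂ) (v : Fin dA × Fin 2 → ℂ), ∀ i j k, ψ (i, j, k) = u j * v (i, k)

/-- Product across the bipartition `C|AB`. -/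
def BisepC {dA dB : ℕ} (ψ : Fin dA × Fin dB × Fin 2 → ℂ) : Prop :=
  ∃ (u : Fin 2 → ℂ) (v : Fin dA × Fin dB → ℂ), ∀ i j k, ψ (i, j, k) = v (i, j) * u k

/-- Genuine multipartite entanglement: not a product across any bipartition. -/
def GenEnt {dA dB : ℕ} (ψ : Fin dA × Fin dB × Fin 2 → ℂ) : Prop :=
  ¬ BisepA ψ ∧ ¬ BisepB ψ ∧ ¬ BisepC ψ


/-- Alice's observables `X₀ = σx`, `X₁ = σy`. -/
def XA : Fin 2 → Matrix (Fin 2) (Fin 2) ℂ := fun x => if x = 0 then sx else sy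

/-- Bob's observables `Y₀ = (σx+σz)/√2`, `Y₁ = (σy+σz)/√2`. -/
def YB : Fin 2 → Matrix (Fin 2) (Fin 2) ℂ := fun y =>
  if y = 0 then (Real.sqrt 2 : ℂ)⁻¹ • (sx + sz) else (Real.sqrt 2 : ℂ)⁻¹ • (sy + sz)

/-- The generalized GHZ state `cos θ·|000⟩ + sin θ·|111⟩`. -/
def ggHZ (θ : ℝ) : Fin 2 × Fin 2 × Fin 2 → ℂ := fun i =>
  if i = (0, 0, 0) then (Real.cos θ : ℂ) else if i = (1, 1, 1) then (Real.sin θ : ℂ) else 0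

/-- A local-hidden-state (LHS) model for an assemblage `σa a b x y` of 2×2 matrices. -/
def HasLHS (σa : Fin 2 → Fin 2 → Fin 2 → Fin 2 → Matrix (Fin 2) (Fin 2) ℂ) : Prop :=
  ∃ (n : ℕ) (p : Fin n → ℝ) (ρh : Fin n → Matrix (Fin 2) (Fin 2) ℂ)
    (PA PB : Fin 2 → Fin 2 → Fin n → ℝ),
    (∀ l, 0 ≤ p l) ∧ (∑ l, p l) = 1 ∧
    (∀ l, (ρh l).PosSemidef ∧ (ρh l).trace = 1) ∧
    (∀ a x l, 0 ≤ PA a x l ∧ PA a x l ≤ 1) ∧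
    (∀ b y l, 0 ≤ PB b y l ∧ PB b y l ≤ 1) ∧
    (∀ x l, ∑ a, PA a x l = 1) ∧ (∀ y l, ∑ b, PB b y l = 1) ∧
    (∀ a b x y, σa a b x y = ∑ l, ((p l * PA a x l * PB b y l : ℝ) : ℂ) • ρh l)

/-- Explicit conditional state of Charlie for the generalized GHZ state. -/
theorem condState_ggHZ (θ : ℝ) (X Y : Matrix (Fin 2) (Fin 2) ℂ) (a b : Fin 2) :
    condState (outer (ggHZ θ)) X Y a b =
      !![Proj a X 0 0 * Proj b Y 0 0 * (Real.cos θ * Real.cos θ),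
         Proj a X 1 0 * Proj b Y 1 0 * (Real.cos θ * Real.sin θ);
         Proj a X 0 1 * Proj b Y 0 1 * (Real.sin θ * Real.cos θ),
         Proj a X 1 1 * Proj b Y 1 1 * (Real.sin θ * Real.sin θ)] := by
  unfold condState
  generalize Proj a X = P
  generalize Proj b Y = Q
  ext i j
  fin_cases i <;> fin_cases j <;>
    simp [trAB, Matrix.mul_apply, Fintype.sum_prod_type, outer, ggHZ, Matrix.one_apply,
      -Complex.ofReal_cos, -Complex.ofReal_sin]

/-- symmetries of the GGHZ assemblage:
`σ^C_{a,b|X₁,Y₀} = σ^C_{a,b|X₀,Y₁}` and `σ^C_{a,b|X₁,Y₁} = σ^C_{1−a,b|X₀,Y₀}`. -/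
theorem stmt11 (θ : ℝ) (hθ : 0 < θ) (hθ' : θ < Real.pi / 2) (a b : Fin 2) :
    condState (outer (ggHZ θ)) (XA 1) (YB 0) a b
      = condState (outer (ggHZ θ)) (XA 0) (YB 1) a b ∧
    condState (outer (ggHZ θ)) (XA 1) (YB 1) a b
      = condState (outer (ggHZ θ)) (XA 0) (YB 0) (1 - a) b := by
  constructor
  · rw [condState_ggHZ, condState_ggHZ]
    fin_cases a <;> fin_cases b <;> ext i j <;> fin_cases i <;> fin_cases j <;>
      simp [Proj, XA, YB, sx, sy, sz] <;> ring_nf <;> simp <;> ring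
  · rw [condState_ggHZ, condState_ggHZ]
    fin_cases a <;> fin_cases b <;> ext i j <;> fin_cases i <;> fin_cases j <;>
      simp [Proj, XA, YB, sx, sy, sz] <;> ring_nf <;> simp <;> ring

end Paper
end
end

section
/- Let θ ∈ (0, π/2), let |ψ(θ)⟩ = cos θ·|000⟩ + sin θ·|111⟩ be the generalized GHZ state, and let X₀ = σx, X₁ = σy, Y₀ = (σx+σz)/√2, Y₁ = (σy+σz)/√2. Then for all a, b ∈ {0,1} and y ∈ {0,1}, Tr[σ^C_{a,b|X₀,Y_y}] > 0 and the normalized conditional state ϱ^C_{a,b|X₀,Y_y} = σ^C_{a,b|X₀,Y_y}/Tr[σ^C_{a,b|X₀,Y_y}] is a rank-one orthogonal projection (i.e., a pure state), and the eight matrices ϱ^C_{0,0|X₀,Y₀}, ϱ^C_{0,1|X₀,Y₀}, ϱ^C_{1,0|X₀,Y₀}, ϱ^C_{1,1|X₀,Y₀}, ϱ^C_{0,0|X₀,Y₁}, ϱ^C_{0,1|X₀,Y₁}, ϱ^C_{1,0|X₀,Y₁}, ϱ^C_{1,1|X₀,Y₁} are pairwise distinct. -/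
open Matrix Complex
open scoped Matrix Kronecker ComplexOrder

noncomputable section
namespace Paper

/-- The normalized conditional state `ϱ = σ / Tr σ`. -/
def normState (σ : Matrix (Fin 2) (Fin 2) ℂ) : Matrix (Fin 2) (Fin 2) ℂ := (σ.trace)⁻¹ • σ

/-- Sign of an outcome. -/
def sg (a : Fin 2) : ℝ := if a = 0 then 1 else -1

/-- Phase attached to Bob's setting. -/
def ph (y : Fin 2) : ℂ := if y = 0 then 1 else Complex.I

lemma sg_sq (a : Fin 2) : sg a * sg a = 1 := by
  fin_cases a <;> simp [sg]

lemma ph_norm (y : Fin 2) : ph y * star (ph y) = 1 := by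
  fin_cases y <;> simp [ph]

/-- Amplitudes of the state. -/
def amp (θ : ℝ) (i : Fin 2) : ℂ := if i = 0 then (Real.cos θ : ℂ) else (Real.sin θ : ℂ)

lemma cond_entry (θ : ℝ) (X Y : Matrix (Fin 2) (Fin 2) ℂ) (a b i j : Fin 2) :
    condState (outer (ggHZ θ)) X Y a b i j =
      Proj a X j i * Proj b Y j i * amp θ i * amp θ j := by
  unfold condState
  generalize Proj a X = A
  generalize Proj b Y = B
  fin_cases i <;> fin_cases j <;>
    simp [amp, trAB, outer, ggHZ, Matrix.mul_apply,
      Fintype.sum_prod_type, Fin.sum_univ_two, Matrix.kroneckerMap_apply, Matrix.one_apply,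
      ← Complex.ofReal_cos, ← Complex.ofReal_sin, Complex.conj_ofReal,
      -Complex.ofReal_cos, -Complex.ofReal_sin] <;>
    ring

lemma cond_eq (θ : ℝ) (a b y : Fin 2) :
    condState (outer (ggHZ θ)) (XA 0) (YB y) a b =
      !![((Real.cos θ ^ 2 * (1 + sg b * (Real.sqrt 2)⁻¹) / 4 : ℝ) : ℂ),
         ((Real.cos θ * Real.sin θ * sg a * sg b * (Real.sqrt 2)⁻¹ / 4 : ℝ) : ℂ) * ph y;
         ((Real.cos θ * Real.sin θ * sg a * sg b * (Real.sqrt 2)⁻¹ / 4 : ℝ) : ℂ) * star (ph y),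
         ((Real.sin θ ^ 2 * (1 - sg b * (Real.sqrt 2)⁻¹) / 4 : ℝ) : ℂ)] := by
  have h := fun i j => cond_entry θ (XA 0) (YB y) a b i j
  ext i j
  rw [h]
  fin_cases i <;> fin_cases j <;> fin_cases y <;> fin_cases a <;> fin_cases b <;>
    simp [amp, XA, YB, Proj, sg, ph, sx, sy, sz] <;>
    ring_nf

lemma r_facts : 0 < (Real.sqrt 2)⁻¹ ∧ (Real.sqrt 2)⁻¹ < 1 ∧
    (Real.sqrt 2)⁻¹ * (Real.sqrt 2)⁻¹ = 1 / 2 := by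
  have h2 : (Real.sqrt 2) * Real.sqrt 2 = 2 := Real.mul_self_sqrt (by norm_num)
  have h0 : 0 < Real.sqrt 2 := by positivity
  have h3 : (Real.sqrt 2)⁻¹ * (Real.sqrt 2)⁻¹ = 1 / 2 := by
    rw [← mul_inv, h2]; norm_num
  have h4 : 0 < (Real.sqrt 2)⁻¹ := by positivity
  exact ⟨h4, by nlinarith, h3⟩

/-- Generic two by two facts. -/
lemma pure_facts (p q m : ℝ) (w : ℂ) (hw : w * star w = 1) (hT : 0 < p + q)
    (hd : p * q = m * m) (M : Matrix (Fin 2) (Fin 2) ℂ)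
    (hM : M = !![(p : ℂ), (m : ℂ) * w; (m : ℂ) * star w, (q : ℂ)]) :
    0 < (M.trace).re ∧ (normState M).IsHermitian ∧
      normState M * normState M = normState M ∧ (normState M).trace = 1 := by
  have htr : M.trace = ((p + q : ℝ) : ℂ) := by
    rw [hM]; simp [Matrix.trace, Fin.sum_univ_two]
  have hne : ((p : ℂ) + q) ≠ 0 := by exact_mod_cast hT.ne'
  have hd' : (p : ℂ) * q = m * m := by exact_mod_cast hd
  have hM2 : M * M = M.trace • M := by
    rw [htr, hM]
    ext i j
    fin_cases i <;> fin_cases j <;> simp [Matrix.mul_apply, Fin.sum_univ_two] <;>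
      simp at hw
    · linear_combination (m : ℂ) * m * hw - hd'
    · ring
    · ring
    · linear_combination (m : ℂ) * m * hw - hd'
  have hne' : M.trace ≠ 0 := by rw [htr]; exact_mod_cast hT.ne'
  refine ⟨by rw [htr]; simpa using hT, ?_, ?_, ?_⟩
  · unfold normState
    rw [htr, hM]
    ext i j
    fin_cases i <;> fin_cases j <;> simp
  · unfold normState
    rw [Matrix.smul_mul, Matrix.mul_smul, hM2, smul_smul, smul_smul,
      mul_assoc, inv_mul_cancel₀ hne', mul_one]
  · unfold normState
    rw [Matrix.trace_smul, smul_eq_mul, inv_mul_cancel₀ hne']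

lemma ph_inj (a a' y y' : Fin 2) (h : (sg a : ℂ) * ph y = sg a' * ph y') : a = a' ∧ y = y' := by
  have hr := congrArg Complex.re h
  have hi := congrArg Complex.im h
  fin_cases a <;> fin_cases a' <;> fin_cases y <;> fin_cases y' <;>
    first | (exact ⟨rfl, rfl⟩) | (exfalso; simp [sg, ph] at hr hi; try linarith)

lemma sg_inj (b b' : Fin 2) (h : sg b = sg b') : b = b' := by
  fin_cases b <;> fin_cases b' <;> first | rfl | (exfalso; norm_num [sg] at h)

lemma sg_bound (b : Fin 2) : 0 < 1 + sg b * (Real.sqrt 2)⁻¹ ∧ 0 < 1 - sg b * (Real.sqrt 2)⁻¹ := by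
  obtain ⟨h0, h1, -⟩ := r_facts
  fin_cases b <;> simp only [sg] <;> constructor <;> norm_num <;> linarith

/-- for the GGHZ state and Alice's setting `X₀ = σx`, each of the eight
normalized conditional states on Charlie's qubit (for both of Bob's settings) is a pure state
(rank-one orthogonal projection), and they are pairwise distinct. -/
theorem stmt12 (θ : ℝ) (hθ : 0 < θ) (hθ' : θ < Real.pi / 2) :
    (∀ a b y : Fin 2,
      0 < ((condState (outer (ggHZ θ)) (XA 0) (YB y) a b).trace).re ∧
      (normState (condState (outer (ggHZ θ)) (XA 0) (YB y) a b)).IsHermitian ∧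
      normState (condState (outer (ggHZ θ)) (XA 0) (YB y) a b) *
        normState (condState (outer (ggHZ θ)) (XA 0) (YB y) a b)
        = normState (condState (outer (ggHZ θ)) (XA 0) (YB y) a b) ∧
      (normState (condState (outer (ggHZ θ)) (XA 0) (YB y) a b)).trace = 1) ∧
    (∀ a b y a' b' y' : Fin 2, (a, b, y) ≠ (a', b', y') →
      normState (condState (outer (ggHZ θ)) (XA 0) (YB y) a b)
        ≠ normState (condState (outer (ggHZ θ)) (XA 0) (YB y') a' b')) := by
  have hc : 0 < Real.cos θ := Real.cos_pos_of_mem_Ioo ⟨by linarith, hθ'⟩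
  have hs : 0 < Real.sin θ := Real.sin_pos_of_pos_of_lt_pi hθ (by linarith [Real.pi_pos])
  obtain ⟨hr0, hr1, hr2⟩ := r_facts
  have hpure := fun a b y : Fin 2 => by
    obtain ⟨h1, h2⟩ := sg_bound b
    refine pure_facts (Real.cos θ ^ 2 * (1 + sg b * (Real.sqrt 2)⁻¹) / 4)
      (Real.sin θ ^ 2 * (1 - sg b * (Real.sqrt 2)⁻¹) / 4)
      (Real.cos θ * Real.sin θ * sg a * sg b * (Real.sqrt 2)⁻¹ / 4) (ph y) (ph_norm y)
      (by positivity) ?_ _ (cond_eq θ a b y)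
    have ha := sg_sq a
    have hb := sg_sq b
    generalize (Real.sqrt 2)⁻¹ = r at *
    generalize sg a = s at *
    generalize sg b = t at *
    have e : (1 + t * r) * (1 - t * r) = s * s * (t * t) * (r * r) := by
      rw [ha, hb, hr2]
      linear_combination (-(r * r)) * hb - hr2
    linear_combination (Real.cos θ ^ 2 * Real.sin θ ^ 2 / 16) * e
  refine ⟨hpure, ?_⟩
  intro a b y a' b' y' hne heq
  apply hne
  have ht := (hpure a b y).1
  have ht' := (hpure a' b' y').1
  have hn : (condState (outer (ggHZ θ)) (XA 0) (YB y) a b).trace ≠ 0 := by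
    intro h; rw [h] at ht; simp at ht
  have hn' : (condState (outer (ggHZ θ)) (XA 0) (YB y') a' b').trace ≠ 0 := by
    intro h; rw [h] at ht'; simp at ht'
  have key : ∀ i j, (condState (outer (ggHZ θ)) (XA 0) (YB y') a' b').trace *
        condState (outer (ggHZ θ)) (XA 0) (YB y) a b i j =
      (condState (outer (ggHZ θ)) (XA 0) (YB y) a b).trace *
        condState (outer (ggHZ θ)) (XA 0) (YB y') a' b' i j := by
    intro i j
    have h := congrFun (congrFun heq i) j
    simp only [normState, Matrix.smul_apply, smul_eq_mul] at h
    field_simp at h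
    linear_combination h
  have k00 := key 0 0
  have k01 := key 0 1
  rw [Matrix.trace_fin_two, Matrix.trace_fin_two] at k00
  have hbb : b = b' := by
    rw [cond_eq, cond_eq] at k00
    simp only [Matrix.of_apply, Matrix.cons_val', Matrix.cons_val_zero, Matrix.cons_val_one,
      Matrix.cons_val_fin_one] at k00
    norm_cast at k00
    apply sg_inj
    have hp : Real.cos θ ^ 2 * Real.sin θ ^ 2 * (Real.sqrt 2)⁻¹ ≠ 0 := by positivity
    apply mul_left_cancel₀ hp
    linear_combination 8 * k00
  subst hbb
  have htt : (condState (outer (ggHZ θ)) (XA 0) (YB y') a' b).trace =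
      (condState (outer (ggHZ θ)) (XA 0) (YB y) a b).trace := by
    rw [cond_eq, cond_eq, Matrix.trace_fin_two, Matrix.trace_fin_two]
    simp
  rw [htt] at k01
  have k := mul_left_cancel₀ hn k01
  rw [cond_eq, cond_eq] at k
  simp only [Matrix.of_apply, Matrix.cons_val', Matrix.cons_val_zero, Matrix.cons_val_one,
      Matrix.cons_val_fin_one] at k
  have hsb : sg b ≠ 0 := by
    intro h; have := sg_sq b; rw [h] at this; norm_num at this
  have hp : ((Real.cos θ * Real.sin θ * sg b * (Real.sqrt 2)⁻¹ / 4 : ℝ) : ℂ) ≠ 0 := by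
    have : Real.cos θ * Real.sin θ * sg b * (Real.sqrt 2)⁻¹ / 4 ≠ 0 := by
      have := hc.ne'
      have := hs.ne'
      have := hr0.ne'
      positivity
    exact_mod_cast this
  have hk : (sg a : ℂ) * ph y = sg a' * ph y' := by
    apply mul_left_cancel₀ hp
    push_cast at k ⊢
    linear_combination k
  obtain ⟨h1, h2⟩ := ph_inj a a' y y' hk
  rw [h1, h2]

end Paper
end
end

section
/- Let |ψ⟩ be a three-qubit pure state that is a product of a qubit state |φ⟩_B on the second factor and a two-qubit state |χ⟩_{AC} on the first and third factors (bipartition B|AC). Then for every choice of Hermitian qubit observables X₀, X₁ (Alice) and Y₀, Y₁ (Bob) with eigenvalues ±1 such that the four conditioning events in CP (with Z₀ = σx, Z₁ = σy) have positive probability, one has CP < 4; i.e., no such state can attain the algebraic maximum CP = 4. -/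
open Matrix Complex
open scoped Matrix Kronecker ComplexOrder

noncomputable section
namespace Paper

lemma proj_herm {X : Matrix (Fin 2) (Fin 2) ℂ} (h : Dichotomic X) (a : Fin 2) :
    (Proj a X)ᴴ = Proj a X := by
  have h1 : Xᴴ = X := h.1
  unfold Proj
  split_ifs <;> simp [conjTranspose_smul, h1]

lemma proj_idem {X : Matrix (Fin 2) (Fin 2) ℂ} (h : Dichotomic X) (a : Fin 2) :
    Proj a X * Proj a X = Proj a X := by
  have h2 : X * X = 1 := h.2
  unfold Proj
  split_ifs <;>
  · simp only [smul_mul_assoc, mul_smul_comm, mul_add, add_mul, mul_one, one_mul, neg_mul,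
      mul_neg, neg_neg, h2]
    ext i j
    simp
    ring

/-- Charlie's (transposed) unnormalized state conditioned on Alice's outcome. -/
def tau (χ : Fin 2 × Fin 2 → ℂ) (P : Matrix (Fin 2) (Fin 2) ℂ) : Matrix (Fin 2) (Fin 2) ℂ :=
  (Matrix.of fun i j => χ (i, j))ᴴ * P * (Matrix.of fun i j => χ (i, j))

/-- Bob's outcome weight. -/
def qB (φ : Fin 2 → ℂ) (P : Matrix (Fin 2) (Fin 2) ℂ) : ℂ := star φ ⬝ᵥ (P *ᵥ φ)

lemma condState_eq (φ : Fin 2 → ℂ) (χ : Fin 2 × Fin 2 → ℂ)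
    (X Y : Matrix (Fin 2) (Fin 2) ℂ) (a b : Fin 2) :
    condState (outer fun i : Fin 2 × Fin 2 × Fin 2 => χ (i.1, i.2.2) * φ i.2.1) X Y a b =
      qB φ (Proj b Y) • (tau χ (Proj a X))ᵀ := by
  unfold condState
  generalize Proj a X = P
  generalize Proj b Y = Q
  ext i j
  fin_cases i <;> fin_cases j <;>
  · simp [trAB, outer, qB, tau, Matrix.mul_apply, Fintype.sum_prod_type, Fin.sum_univ_two,
      dotProduct, mulVec, Matrix.one_apply]
    ring

lemma qB_im (φ : Fin 2 → ℂ) {Y : Matrix (Fin 2) (Fin 2) ℂ} (h : Dichotomic Y) (b : Fin 2) :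
    (qB φ (Proj b Y)).im = 0 := by
  have hP := proj_herm h b
  generalize Proj b Y = Q at hP
  rw [← Complex.conj_eq_iff_im]
  have e := fun i j => congrFun (congrFun hP i) j
  simp only [conjTranspose_apply] at e
  have e00 := e 0 0
  have e01 := e 0 1
  have e10 := e 1 0
  have e11 := e 1 1
  simp only [RCLike.star_def] at e00 e01 e10 e11
  simp [qB, dotProduct, mulVec, Fin.sum_univ_two]
  rw [e00, e01, e10, e11]
  ring

lemma tau_psd (χ : Fin 2 × Fin 2 → ℂ) {X : Matrix (Fin 2) (Fin 2) ℂ} (h : Dichotomic X)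
    (a : Fin 2) : (tau χ (Proj a X)).PosSemidef := by
  have : tau χ (Proj a X) = (Proj a X * (Matrix.of fun i j => χ (i, j)))ᴴ *
      (Proj a X * (Matrix.of fun i j => χ (i, j))) := by
    rw [conjTranspose_mul, proj_herm h a, tau]
    conv_lhs => rw [← proj_idem h a]
    simp only [Matrix.mul_assoc]
  rw [this]
  exact posSemidef_conjTranspose_mul_self _

lemma tau_data (χ : Fin 2 × Fin 2 → ℂ) {X : Matrix (Fin 2) (Fin 2) ℂ} (h : Dichotomic X)
    (a : Fin 2) : ∃ t x y : ℝ, 0 ≤ t ∧ 4 * (x ^ 2 + y ^ 2) ≤ t ^ 2 ∧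
    ∀ (φ : Fin 2 → ℂ) (Y : Matrix (Fin 2) (Fin 2) ℂ) (b : Fin 2), Dichotomic Y →
    0 < (condState (outer fun i : Fin 2 × Fin 2 × Fin 2 => χ (i.1, i.2.2) * φ i.2.1)
      X Y a b).trace.re →
    0 < t ∧
    condProb sx (condState (outer fun i : Fin 2 × Fin 2 × Fin 2 => χ (i.1, i.2.2) * φ i.2.1)
      X Y a b) 0 = (t + 2 * x) / (2 * t) ∧
    condProb sy (condState (outer fun i : Fin 2 × Fin 2 × Fin 2 => χ (i.1, i.2.2) * φ i.2.1)
      X Y a b) 0 = (t + 2 * y) / (2 * t) := by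
  have hp := tau_psd χ h a
  have key : ∀ (φ : Fin 2 → ℂ) (Y : Matrix (Fin 2) (Fin 2) ℂ) (b : Fin 2), _ :=
    fun φ Y b => condState_eq φ χ X Y a b
  generalize tau χ (Proj a X) = T at hp key
  have d0 := Complex.le_def.1 (hp.diag_nonneg (i := 0))
  have d1 := Complex.le_def.1 (hp.diag_nonneg (i := 1))
  have dd := (Complex.le_def.1 hp.det_nonneg).1
  have e : star (T 0 1) = T 1 0 := hp.1.apply 1 0
  have er : (T 1 0).re = (T 0 1).re := by rw [← e]; simp
  have ei : (T 1 0).im = -(T 0 1).im := by rw [← e]; simp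
  simp only [Complex.zero_re, Complex.zero_im] at d0 d1 dd
  rw [det_fin_two] at dd
  simp only [Complex.sub_re, Complex.mul_re, er, ei, ← d0.2, ← d1.2] at dd
  refine ⟨(T 0 0).re + (T 1 1).re, (T 0 1).re, (T 0 1).im, by linarith [d0.1, d1.1],
    by nlinarith [sq_nonneg ((T 0 0).re - (T 1 1).re)], ?_⟩
  intro φ Y b hY hpos
  rw [key] at hpos ⊢
  have hq := qB_im φ hY b
  generalize qB φ (Proj b Y) = q at hpos hq ⊢
  have ht : ((q • Tᵀ).trace).re = q.re * ((T 0 0).re + (T 1 1).re) := by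
    simp [trace_fin_two, hq]
  rw [ht] at hpos
  have t0 : 0 < (T 0 0).re + (T 1 1).re := by
    rcases (add_nonneg d0.1 d1.1).lt_or_eq with h | h
    · exact h
    · rw [← h] at hpos; simp at hpos
  have q0 : q.re ≠ 0 := by
    intro h; rw [h] at hpos; simp at hpos
  have hx : ((Proj 0 sx * (q • Tᵀ)).trace).re
      = q.re * (((T 0 0).re + (T 1 1).re + 2 * (T 0 1).re) / 2) := by
    simp [Proj, sx, trace_fin_two, hq, Matrix.mul_apply, Fin.sum_univ_two, er, ei]; left; ring
  have hy : ((Proj 0 sy * (q • Tᵀ)).trace).re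
      = q.re * (((T 0 0).re + (T 1 1).re + 2 * (T 0 1).im) / 2) := by
    simp [Proj, sy, trace_fin_two, hq, Matrix.mul_apply, Fin.sum_univ_two, er, ei]; left; ring
  refine ⟨t0, ?_, ?_⟩
  · rw [condProb, hx, ht, mul_div_mul_left _ _ q0, div_div]
  · rw [condProb, hy, ht, mul_div_mul_left _ _ q0, div_div]

lemma frac_le {t x y : ℝ} (ht : 0 < t) (h : 4 * (x ^ 2 + y ^ 2) ≤ t ^ 2) :
    (t + 2 * x) / (2 * t) ≤ 1 := by
  rw [div_le_one (by linarith)]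
  nlinarith [sq_nonneg y]

lemma frac_lt {t x y : ℝ} (ht : 0 < t) (h : 4 * (x ^ 2 + y ^ 2) ≤ t ^ 2) :
    (t + 2 * x) / (2 * t) + (t + 2 * y) / (2 * t) < 2 := by
  rw [← add_div, div_lt_iff₀ (by linarith)]
  nlinarith [sq_nonneg (x - y), sq_nonneg (x + y - t)]

/-- no three-qubit pure state that is a product across the bipartition `B|AC`
can attain the algebraic maximum `CP = 4`. -/
theorem stmt15 (φB : Fin 2 → ℂ) (χ : Fin 2 × Fin 2 → ℂ)
    (hφ : UnitVec φB) (hχ : UnitVec χ)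
    (X0 X1 Y0 Y1 : Matrix (Fin 2) (Fin 2) ℂ)
    (hX0 : Dichotomic X0) (hX1 : Dichotomic X1) (hY0 : Dichotomic Y0) (hY1 : Dichotomic Y1)
    (hpos : PosEvents (outer fun i : Fin 2 × Fin 2 × Fin 2 => χ (i.1, i.2.2) * φB i.2.1)
      X0 X1 Y0 Y1) :
    CP (outer fun i : Fin 2 × Fin 2 × Fin 2 => χ (i.1, i.2.2) * φB i.2.1) X0 X1 Y0 Y1 < 4 := by
  obtain ⟨p1, p2, p3, p4⟩ := hpos
  obtain ⟨t1, x1, y1, -, b1, f1⟩ := tau_data χ hX0 1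
  obtain ⟨t2, x2, y2, -, b2, f2⟩ := tau_data χ hX1 0
  obtain ⟨t3, x3, y3, -, b3, f3⟩ := tau_data χ hX0 0
  obtain ⟨q1, g1, -⟩ := f1 φB Y0 1 hY0 p1
  obtain ⟨q2, g2, -⟩ := f2 φB Y1 1 hY1 p2
  obtain ⟨q3, -, g3⟩ := f3 φB Y1 1 hY1 p3
  obtain ⟨-, -, g4⟩ := f2 φB Y0 1 hY0 p4
  rw [CP, g1, g2, g3, g4]
  have := frac_le q1 b1
  have := frac_lt q2 b2
  have := frac_le (x := y3) (y := x3) q3 (by linarith)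
  linarith

end Paper
end
end
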